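/- Let U be a strictly positive bounded linear operator on X = L^p(E, μ) with spectral radius r(U) > 0, admitting a splitting U = W + K with bounded linear operators W and K such that ‖W‖ < r(U) and K(λ − W)⁻¹ is power compact for every real λ > ‖W‖, and let φ₀ ∈ X'₊ \ {0} satisfy U* φ₀ = r(U) φ₀. Then, setting Ũ := U / r(U), there exist ζ ∈ (0, 1) and C ≥ 1 such that for every n ∈ ℕ and every f ∈ X with φ₀(f) = 0, one has ‖Ũⁿ f‖ ≤ C ζⁿ ‖f‖. -/

import Mathlib

open MeasureTheory Filter ENNReal

/-!
Write `T = U / r`. For real `z` the resolvent series of `W + K` is a finite sum of series with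
radius of convergence larger than `1 / r`, plus a remainder that contains the factor
`(z K (1 - z W)⁻¹) ^ n`. By hypothesis and an uncountability argument some single `n` makes this
factor compact for infinitely many `z` in a compact interval. Compact operators form a closed
subspace, so by the identity theorem all its power series coefficients are compact. Hence `T ^ N`
is a compact operator up to an error that tends to zero: `T` is quasi-compact.

On `ker φ₀` the norm `q f = φ₀ |f|` satisfies `q (T f) < q f` for `f ≠ 0`: the functional `φ₀` is
strictly positive, and `U f⁺`, `U f⁻` are not disjoint. Although `q` is weaker than the given norm,
quasi-compactness provides enough accumulation points for a compactness argument to turn this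
strict decrease into `‖T ^ N‖ < 1` on `ker φ₀` for some `N`.
-/

section IdentityTheorem

variable {𝕜 E : Type*} [RCLike 𝕜] [NormedAddCommGroup E] [NormedSpace 𝕜 E]
  {a : ℕ → E} {f : 𝕜 → E} {R : ℝ} {s Z : Set 𝕜}

lemma hasFPowerSeriesOnBall_of_hasSum (hR : 0 < R)
    (hf : ∀ z, ‖z‖ < R → HasSum (fun n => z ^ n • a n) (f z)) :
    HasFPowerSeriesOnBall f (fun n => ContinuousMultilinearMap.mkPiRing 𝕜 (Fin n) (a n)) 0
      (ENNReal.ofReal R) where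
  r_le := by
    refine ENNReal.le_of_forall_nnreal_lt fun t ht => ?_
    have htR : ‖((t : ℝ) : 𝕜)‖ < R := by
      simpa using (ENNReal.ofReal_lt_ofReal_iff hR).1 (by simpa using ht)
    refine FormalMultilinearSeries.le_radius_of_tendsto _ (l := 0) ?_
    simpa [norm_smul, mul_comm] using (hf _ htR).summable.tendsto_atTop_zero.norm
  r_pos := ENNReal.ofReal_pos.2 hR
  hasSum {z} hz := by
    rw [Metric.eball_ofReal, mem_ball_zero_iff] at hz
    simpa using hf z hz

lemma coeff_eq_zero_of_infinite_zeros [CompleteSpace E]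
    (hf : ∀ z, ‖z‖ < R → HasSum (fun n => z ^ n • a n) (f z))
    (hs : IsCompact s) (hsR : s ⊆ Metric.ball 0 R) (hZs : Z ⊆ s) (hZ : Z.Infinite)
    (hfZ : ∀ z ∈ Z, f z = 0) (n : ℕ) : a n = 0 := by
  obtain ⟨z, hzs, hz⟩ := hZ.exists_accPt_of_subset_isCompact hs hZs
  have hR : 0 < R := Metric.pos_of_mem_ball (hsR hzs)
  have hseries := hasFPowerSeriesOnBall_of_hasSum hR hf
  have hzero : Set.EqOn f 0 (Metric.ball 0 R) := by
    rw [← Metric.eball_ofReal]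
    refine hseries.analyticOnNhd.eqOn_zero_of_preconnected_of_frequently_eq_zero ?_
      (Metric.eball_ofReal (x := (0 : 𝕜)) ▸ hsR hzs) ((accPt_iff_frequently_nhdsNE.1 hz).mono hfZ)
    rw [Metric.eball_ofReal]
    exact Metric.isPreconnected_ball
  have hseries_zero : HasFPowerSeriesAt (0 : 𝕜 → E) _ 0 :=
    hseries.hasFPowerSeriesAt.congr (Filter.mem_of_superset (Metric.ball_mem_nhds 0 hR) hzero)
  exact (ContinuousMultilinearMap.mkPiRing_eq_zero_iff _).1 (congrFun hseries_zero.eq_zero n)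

lemma coeff_mem_of_infinite_mem [CompleteSpace E] {S : Submodule 𝕜 E} (hS : IsClosed (S : Set E))
    (hf : ∀ z, ‖z‖ < R → HasSum (fun n => z ^ n • a n) (f z))
    (hs : IsCompact s) (hsR : s ⊆ Metric.ball 0 R) (hZs : Z ⊆ s) (hZ : Z.Infinite)
    (hfZ : ∀ z ∈ Z, f z ∈ S) (n : ℕ) : a n ∈ S := by
  have hquot : ∀ z, ‖z‖ < R → HasSum (fun n => z ^ n • S.mkQ (a n)) (S.mkQ (f z)) :=
    fun z hz => by simpa using (hf z hz).mapL S.mkQL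
  have hcoeff := coeff_eq_zero_of_infinite_zeros hquot hs hsR hZs hZ (by simpa using hfZ) n
  simpa using hcoeff

end IdentityTheorem

section PowerSeriesEvaluation

open PowerSeries

/-- The power series `P`, with coefficients in a normed algebra that need not be commutative,
converges absolutely at the scalar `z` with sum `a`. -/
def HasEvalAt {𝕜 A : Type*} [NormedField 𝕜] [NormedRing A] [NormedAlgebra 𝕜 A]
    (z : 𝕜) (P : A⟦X⟧) (a : A) : Prop :=
  Summable (fun n => ‖z ^ n • coeff n P‖) ∧ HasSum (fun n => z ^ n • coeff n P) a

/-- The geometric series `∑ aⁿ Xⁿ`, that is, the power series of `(1 - z a)⁻¹` in `z`. -/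
def geomSeries {A : Type*} [Semiring A] (a : A) : A⟦X⟧ := PowerSeries.mk fun n => a ^ n

variable {𝕜 A : Type*} [NormedField 𝕜] [NormedRing A] [NormedAlgebra 𝕜 A] {z : 𝕜} {P Q : A⟦X⟧}
  {a b : A}

lemma hasEvalAt_C_mul_X (z : 𝕜) (a : A) : HasEvalAt z (C a * X) (z • a) := by
  have hcoeff : (fun n => z ^ n • coeff n (C a * X : A⟦X⟧)) = Pi.single 1 (z • a) := by
    ext n
    rcases eq_or_ne n 1 with rfl | hn <;> simp [coeff_X, *]
  refine ⟨?_, by simpa only [hcoeff] using hasSum_pi_single 1 (z • a)⟩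
  exact summable_of_ne_finset_zero (s := {1}) fun n hn => by simp_all [coeff_X]

lemma HasEvalAt.one (z : 𝕜) : HasEvalAt z (1 : A⟦X⟧) 1 := by
  have hcoeff : (fun n => z ^ n • coeff n (1 : A⟦X⟧)) = Pi.single 0 1 := by
    ext n
    rcases eq_or_ne n 0 with rfl | hn <;> simp [coeff_one, *]
  refine ⟨?_, by simpa only [hcoeff] using hasSum_pi_single 0 (1 : A)⟩
  exact summable_of_ne_finset_zero (s := {0}) fun n hn => by simp_all [coeff_one]

lemma HasEvalAt.mul [CompleteSpace A] (hP : HasEvalAt z P a) (hQ : HasEvalAt z Q b) :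
    HasEvalAt z (P * Q) (a * b) := by
  have hcoeff (n : ℕ) : z ^ n • coeff n (P * Q) = ∑ kl ∈ Finset.HasAntidiagonal.antidiagonal n,
      (z ^ kl.1 • coeff kl.1 P) * (z ^ kl.2 • coeff kl.2 Q) := by
    rw [coeff_mul, Finset.smul_sum]
    refine Finset.sum_congr rfl fun kl hkl => ?_
    rw [smul_mul_smul_comm, ← pow_add, Finset.HasAntidiagonal.mem_antidiagonal.1 hkl]
  have hsum := summable_norm_sum_mul_antidiagonal_of_summable_norm hP.1 hQ.1
  simp only [HasEvalAt, hcoeff]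
  refine ⟨hsum, ?_⟩
  rw [← hP.2.tsum_eq, ← hQ.2.tsum_eq,
    tsum_mul_tsum_eq_tsum_sum_antidiagonal_of_summable_norm hP.1 hQ.1]
  exact hsum.of_norm.hasSum

lemma HasEvalAt.pow [CompleteSpace A] (hP : HasEvalAt z P a) (n : ℕ) :
    HasEvalAt z (P ^ n) (a ^ n) := by
  induction n with
  | zero => simpa only [pow_zero] using HasEvalAt.one z
  | succ n ih => simpa only [pow_succ] using ih.mul hP

lemma hasEvalAt_geomSeries [CompleteSpace A] (h : ‖z • a‖ < 1) :
    HasEvalAt z (geomSeries a) (Ring.inverse (1 - z • a)) := by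
  have hcoeff : (fun n => z ^ n • coeff n (geomSeries a)) = fun n => (z • a) ^ n := by
    simp only [geomSeries, coeff_mk, smul_pow]
  refine ⟨?_, by simpa only [hcoeff] using hasSum_geom_series_inverse _ h⟩
  refine (summable_nat_add_iff 1).1 ?_
  have hgeom := (summable_nat_add_iff 1).2 (summable_geometric_of_lt_one (norm_nonneg (z • a)) h)
  refine hgeom.of_nonneg_of_le (fun _ => norm_nonneg _) fun n => ?_
  simpa only [geomSeries, coeff_mk, smul_pow] using norm_pow_le' (z • a) n.succ_pos

lemma hasEvalAt_C_mul_X_mul_geomSeries [CompleteSpace A] (h : ‖z • a‖ < 1) (b : A) :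
    HasEvalAt z (C b * X * geomSeries a) (z • b * Ring.inverse (1 - z • a)) :=
  (hasEvalAt_C_mul_X z b).mul (hasEvalAt_geomSeries h)

end PowerSeriesEvaluation

section GeometricSeries

open PowerSeries

variable {A : Type*} [Ring A]

lemma geomSeries_mul_one_sub (a : A) : geomSeries a * (1 - C a * X) = 1 := by
  ext (_ | n) <;> simp [geomSeries, mul_sub, ← mul_assoc, coeff_succ_mul_X, pow_succ, coeff_one]

lemma one_sub_mul_geomSeries (a : A) : (1 - C a * X) * geomSeries a = 1 := by
  ext (_ | n) <;>
    simp [geomSeries, sub_mul, mul_assoc, coeff_succ_X_mul, pow_succ', coeff_one]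

lemma geomSeries_add (a b : A) :
    geomSeries (a + b) = geomSeries a + geomSeries (a + b) * (C b * X * geomSeries a) := by
  have hsplit : (1 : A⟦X⟧) - C a * X = (1 - C (a + b) * X) + C b * X := by
    rw [map_add]; noncomm_ring
  calc geomSeries (a + b)
      = geomSeries (a + b) * (((1 - C (a + b) * X) + C b * X) * geomSeries a) := by
        rw [← hsplit, one_sub_mul_geomSeries, mul_one]
    _ = _ := by rw [add_mul, mul_add, ← mul_assoc, geomSeries_mul_one_sub, one_mul]

lemma geomSeries_add_eq_sum (a b : A) (n : ℕ) :
    geomSeries (a + b) = ∑ j ∈ Finset.range n, geomSeries a * (C b * X * geomSeries a) ^ j +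
      geomSeries (a + b) * (C b * X * geomSeries a) ^ n := by
  induction n with
  | zero => simp
  | succ n ih =>
    conv_lhs => rw [ih]
    conv_lhs => enter [2]; rw [geomSeries_add]
    rw [Finset.sum_range_succ, add_mul, add_assoc, mul_assoc (geomSeries (a + b)), ← pow_succ']

end GeometricSeries

section QuasiCompact

open PowerSeries

/-- Some positive power of the operator `T` is compact. -/
def IsPowerCompact {𝕜 E : Type*} [NontriviallyNormedField 𝕜] [NormedAddCommGroup E]
    [NormedSpace 𝕜 E] (T : E →L[𝕜] E) : Prop :=
  ∃ n : ℕ, 0 < n ∧ IsCompactOperator ⇑(T ^ n)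

/-- Quasi-compactness in the sense of Yosida and Kakutani: the powers of `T` are asymptotically
within norm distance zero of the compact operators. -/
def IsQuasiCompact {𝕜 E : Type*} [NontriviallyNormedField 𝕜] [NormedAddCommGroup E]
    [NormedSpace 𝕜 E] (T : E →L[𝕜] E) : Prop :=
  ∃ L : ℕ → E →L[𝕜] E, (∀ n, IsCompactOperator ⇑(L n)) ∧
    Tendsto (fun n => ‖T ^ n - L n‖) atTop (nhds 0)

lemma coeff_mul_mem_compactOperator {𝕜 E : Type*} [NontriviallyNormedField 𝕜]
    [NormedAddCommGroup E] [NormedSpace 𝕜 E] (P : (E →L[𝕜] E)⟦X⟧) {Q : (E →L[𝕜] E)⟦X⟧}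
    (hQ : ∀ n, coeff n Q ∈ compactOperator (RingHom.id 𝕜) E E) (n : ℕ) :
    coeff n (P * Q) ∈ compactOperator (RingHom.id 𝕜) E E := by
  rw [coeff_mul]
  exact sum_mem fun kl _ => (hQ kl.2).clm_comp (coeff kl.1 P)

lemma mul_inverse_inv_smul_one_sub {𝕜 A : Type*} [Field 𝕜] [Ring A] [Algebra 𝕜 A] {z : 𝕜}
    (hz : z ≠ 0) (a b : A) :
    b * Ring.inverse (z⁻¹ • (1 : A) - a) = z • b * Ring.inverse (1 - z • a) := by
  have hres := spectrum.units_smul_resolvent_self (r := (Units.mk0 z hz)⁻¹) (a := a)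
  simp only [inv_inv, resolvent, map_one, Algebra.algebraMap_eq_smul_one, Units.val_inv_eq_inv_val,
    Units.val_mk0, Units.smul_def] at hres
  rw [← hres, smul_mul_smul_comm, mul_inv_cancel₀ hz, one_smul]

lemma norm_smul_lt_one_of_norm_le_inv {𝕜 E : Type*} [NormedField 𝕜] [SeminormedAddCommGroup E]
    [NormedSpace 𝕜 E] {z : 𝕜} {x : E} {r : ℝ} (hx : ‖x‖ < r) (hz : ‖z‖ ≤ r⁻¹) : ‖z • x‖ < 1 := by
  have hr : 0 < r := (norm_nonneg x).trans_lt hx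
  calc ‖z • x‖ = ‖z‖ * ‖x‖ := norm_smul z x
    _ ≤ r⁻¹ * ‖x‖ := by gcongr
    _ < r⁻¹ * r := by gcongr
    _ = 1 := inv_mul_cancel₀ hr.ne'

variable {E : Type*} [NormedAddCommGroup E] [NormedSpace ℝ E] {W K : E →L[ℝ] E} {r : ℝ}

lemma exists_infinite_isCompactOperator_pow {t : Set ℝ} {T : ℝ → E →L[ℝ] E} (ht : ¬ t.Countable)
    (hT : ∀ z ∈ t, IsPowerCompact (T z)) :
    ∃ n, {z ∈ t | IsCompactOperator ⇑(T z ^ n)}.Infinite := by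
  by_contra! hfin
  refine ht ((Set.countable_iUnion fun n => (hfin n).countable).mono ?_)
  intro z hz
  obtain ⟨n, -, hn⟩ := hT z hz
  exact Set.mem_iUnion.2 ⟨n, hz, hn⟩

variable [CompleteSpace E]

/- The sums of the series are compact for infinitely many `z` in a compact interval, and the compact
operators form a closed subspace, so the identity theorem passes compactness to coefficients. -/
lemma exists_coeff_pow_mem_compactOperator (hW : ‖W‖ < r)
    (hK : ∀ lam, ‖W‖ < lam →
      IsPowerCompact (K * Ring.inverse (lam • (1 : E →L[ℝ] E) - W))) :
    ∃ n, ∀ N, coeff N ((C K * X * geomSeries W) ^ n) ∈ compactOperator (RingHom.id ℝ) E E := by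
  have hr : 0 < r⁻¹ := inv_pos.2 ((norm_nonneg W).trans_lt hW)
  have hpow : ∀ z ∈ Set.Icc (r⁻¹ / 3) (r⁻¹ / 2),
      IsPowerCompact (z • K * Ring.inverse (1 - z • W)) := fun z hz => by
    have hz0 : 0 < z := by linarith [hz.1]
    rw [← mul_inverse_inv_smul_one_sub hz0.ne']
    exact hK _ (hW.trans_le (le_inv_of_le_inv₀ hz0 (by linarith [hz.2])))
  obtain ⟨n, hn⟩ := exists_infinite_isCompactOperator_pow
    (fun h => by linarith [Cardinal.Real.Icc_countable_iff.1 h]) hpow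
  refine ⟨n, coeff_mem_of_infinite_mem (S := compactOperator (RingHom.id ℝ) E E) (R := r⁻¹)
    (f := fun z => (z • K * Ring.inverse (1 - z • W)) ^ n)
    isClosed_setOfPred_isCompactOperator (fun z hz => ?_) isCompact_Icc (fun z hz => ?_)
    (Set.sep_subset _ _) hn fun z hz => hz.2⟩
  · exact ((hasEvalAt_C_mul_X_mul_geomSeries (norm_smul_lt_one_of_norm_le_inv hW hz.le) K).pow n).2
  · rw [mem_ball_zero_iff, Real.norm_eq_abs, abs_lt]
    constructor <;> linarith [hz.1, hz.2]

/- In `geomSeries_add_eq_sum`, the first `n` summands converge at `r⁻¹`, so that their normalized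
coefficients tend to zero, while the remainder has compact coefficients. -/
theorem isQuasiCompact_inv_smul_add (hW : ‖W‖ < r)
    (hK : ∀ lam, ‖W‖ < lam →
      IsPowerCompact (K * Ring.inverse (lam • (1 : E →L[ℝ] E) - W))) :
    IsQuasiCompact (r⁻¹ • (W + K)) := by
  obtain ⟨n, hn⟩ := exists_coeff_pow_mem_compactOperator hW hK
  have hr : 0 < r := (norm_nonneg W).trans_lt hW
  have hz : ‖r⁻¹ • W‖ < 1 := norm_smul_lt_one_of_norm_le_inv hW (by simp [abs_of_pos hr])
  refine ⟨fun N => r⁻¹ ^ N • coeff N (geomSeries (W + K) * (C K * X * geomSeries W) ^ n),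
    fun N => Submodule.smul_mem _ _ (coeff_mul_mem_compactOperator _ hn N), ?_⟩
  have herror (N : ℕ) : (r⁻¹ • (W + K)) ^ N -
      r⁻¹ ^ N • coeff N (geomSeries (W + K) * (C K * X * geomSeries W) ^ n) =
      ∑ j ∈ Finset.range n, r⁻¹ ^ N • coeff N (geomSeries W * (C K * X * geomSeries W) ^ j) := by
    have hcoeff := congrArg (coeff N) (geomSeries_add_eq_sum W K n)
    rw [map_add, map_sum, ← sub_eq_iff_eq_add] at hcoeff
    rw [← Finset.smul_sum, ← hcoeff, smul_sub, smul_pow, geomSeries, coeff_mk]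
  simp only [herror]
  refine tendsto_zero_iff_norm_tendsto_zero.1 ?_
  rw [← Finset.sum_const_zero (s := Finset.range n)]
  exact tendsto_finsetSum _ fun j _ => ((hasEvalAt_geomSeries hz).mul
    ((hasEvalAt_C_mul_X_mul_geomSeries hz K).pow j)).2.summable.tendsto_atTop_zero

end QuasiCompact

section AsymptoticCompactness

lemma exists_tendsto_subseq_of_eventually_near {X : Type*} [PseudoMetricSpace X] [CompleteSpace X]
    {x : ℕ → X} (hx : ∀ ε > 0, ∃ s, TotallyBounded s ∧ ∀ᶠ k in atTop, ∃ y ∈ s, dist (x k) y ≤ ε) :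
    ∃ g, ∃ φ : ℕ → ℕ, StrictMono φ ∧ Tendsto (fun k => x (φ k)) atTop (nhds g) := by
  have hrange : TotallyBounded (Set.range x) := by
    refine Metric.totallyBounded_iff.2 fun ε hε => ?_
    obtain ⟨s, hs, hxs⟩ := hx (ε / 2) (half_pos hε)
    obtain ⟨m, hm⟩ := eventually_atTop.1 hxs
    obtain ⟨t, ht, hst⟩ := Metric.totallyBounded_iff.1 hs (ε / 2) (half_pos hε)
    refine ⟨t ∪ x '' Set.Iio m, ht.union ((Set.finite_Iio m).image x), ?_⟩
    rintro _ ⟨k, rfl⟩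
    rcases lt_or_ge k m with hk | hk
    · exact Set.mem_biUnion (Or.inr ⟨k, hk, rfl⟩) (Metric.mem_ball_self hε)
    · obtain ⟨y, hys, hxy⟩ := hm k hk
      obtain ⟨c, hct, hyc⟩ := Set.mem_iUnion₂.1 (hst hys)
      refine Set.mem_biUnion (Or.inl hct) (Metric.mem_ball.2 ?_)
      linarith [dist_triangle (x k) y c, Metric.mem_ball.1 hyc]
  obtain ⟨g, -, φ, hφ, hg⟩ := (hrange.closure.isCompact_of_isClosed isClosed_closure).tendsto_subseq
    fun n => subset_closure (Set.mem_range_self n)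
  exact ⟨g, φ, hφ, hg⟩

/-- Bounded orbit segments `f k, T (f k), …, Tⁿ (f k)`, with `n = n k → ∞`, have end points that
converge along a subsequence. Unlike quasi-compactness this property evidently passes to closed
invariant subspaces. -/
def IsAsymptoticallyCompact {𝕜 E : Type*} [NontriviallyNormedField 𝕜] [NormedAddCommGroup E]
    [NormedSpace 𝕜 E] (T : E →L[𝕜] E) : Prop :=
  ∀ (B : ℝ) (n : ℕ → ℕ) (f : ℕ → E), Tendsto n atTop atTop →
    (∀ k, ∀ j ≤ n k, ‖(T ^ j) (f k)‖ ≤ B) →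
    ∃ g, ∃ φ : ℕ → ℕ, StrictMono φ ∧ Tendsto (fun k => (T ^ n (φ k)) (f (φ k))) atTop (nhds g)

variable {𝕜 E : Type*} [NontriviallyNormedField 𝕜] [NormedAddCommGroup E] [NormedSpace 𝕜 E]
  {T : E →L[𝕜] E}

lemma IsQuasiCompact.isAsymptoticallyCompact [CompleteSpace E] (hT : IsQuasiCompact T) :
    IsAsymptoticallyCompact T := by
  obtain ⟨L, hL, hTL⟩ := hT
  intro B n f hn hB
  refine exists_tendsto_subseq_of_eventually_near (x := fun k => (T ^ n k) (f k))
    fun ε hε => ?_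
  have hlim : Tendsto (fun m => ‖T ^ m - L m‖ * B) atTop (nhds 0) := by
    simpa using hTL.mul_const B
  obtain ⟨m, hm⟩ := (hlim.eventually_lt_const hε).exists
  obtain ⟨s, hs, hLs⟩ :=
    (hL m).image_closedBall_subset_compact (f := (L m).toLinearMap) B
  refine ⟨s, hs.totallyBounded, ?_⟩
  filter_upwards [hn.eventually_ge_atTop m] with k hk
  set y := (T ^ (n k - m)) (f k) with hy
  have hyB : ‖y‖ ≤ B := hB k _ (Nat.sub_le _ _)
  have hTy : (T ^ n k) (f k) = (T ^ m) y := by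
    rw [hy, ← mul_apply_eq_comp, ← pow_add, Nat.add_sub_cancel' hk]
  refine ⟨L m y, hLs ⟨y, by simpa using hyB, rfl⟩, ?_⟩
  calc dist ((T ^ n k) (f k)) (L m y) = ‖(T ^ m - L m) y‖ := by
        rw [hTy, dist_eq_norm, sub_apply]
    _ ≤ ‖T ^ m - L m‖ * B := (T ^ m - L m).le_opNorm_of_le hyB
    _ ≤ ε := hm.le

lemma coe_restrict_pow_apply {p : Submodule 𝕜 E} (hp : ∀ f ∈ p, T f ∈ p) (n : ℕ) (f : p) :
    (((T.restrict hp) ^ n) f : E) = (T ^ n) f := by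
  induction n generalizing f with
  | zero => simp
  | succ n ih =>
    rw [pow_succ, mul_apply_eq_comp, ih, pow_succ, mul_apply_eq_comp,
      ContinuousLinearMap.coe_restrict_apply]

lemma IsAsymptoticallyCompact.restrict {p : Submodule 𝕜 E} (hT : IsAsymptoticallyCompact T)
    (hpc : IsClosed (p : Set E)) (hp : ∀ f ∈ p, T f ∈ p) :
    IsAsymptoticallyCompact (T.restrict hp) := by
  intro B n f hn hB
  simp only [Submodule.coe_norm, coe_restrict_pow_apply] at hB
  obtain ⟨g, φ, hφ, hg⟩ := hT B n (fun k => f k) hn hB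
  simp only [← coe_restrict_pow_apply hp] at hg
  have hgp : g ∈ p := hpc.mem_of_tendsto hg (Eventually.of_forall fun k => Subtype.property _)
  exact ⟨⟨g, hgp⟩, φ, hφ, tendsto_subtype_rng.2 hg⟩

end AsymptoticCompactness

section Seminorm

variable {E : Type*} [NormedAddCommGroup E] [NormedSpace ℝ E] {T : E →L[ℝ] E} {q : Seminorm ℝ E}

lemma exists_forall_le_of_not_bddAbove {α : Type*} [LinearOrder α] {u : ℕ → α}
    (hu : ¬ BddAbove (Set.range u)) (b : α) (k : ℕ) :
    ∃ n ≥ k, b < u n ∧ ∀ j ≤ n, u j ≤ u n := by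
  have hex : ∃ n, max b (partialSups u k) < u n := by
    by_contra! h
    exact hu ⟨_, Set.forall_mem_range.2 h⟩
  classical
  have hfind := max_lt_iff.1 (Nat.find_spec hex)
  refine ⟨Nat.find hex, ?_, hfind.1, fun j hj => ?_⟩
  · by_contra! hlt
    exact (le_partialSups_of_le u hlt.le).not_gt hfind.2
  · rcases hj.lt_or_eq with hlt | rfl
    · exact (not_lt.1 (Nat.find_min hex hlt)).trans (Nat.find_spec hex).le
    · rfl

lemma antitone_seminorm_pow_apply (hT : ∀ f, q (T f) ≤ q f) (f : E) :
    Antitone fun n : ℕ => q ((T ^ n) f) :=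
  antitone_nat_of_succ_le fun n => by
    rw [pow_succ', mul_apply_eq_comp]
    exact hT _

/- Otherwise normalized orbit segments of record length accumulate at a vector of positive norm and
vanishing seminorm. -/
lemma bddAbove_norm_pow (hcomp : IsAsymptoticallyCompact T) (hq : Continuous q)
    (hq0 : ∀ f, q f = 0 → f = 0) (hT : ∀ f, q (T f) ≤ q f) :
    BddAbove (Set.range fun n : ℕ => ‖T ^ n‖) := by
  by_contra hunbdd
  choose n hn hbig hrec using fun k : ℕ => exists_forall_le_of_not_bddAbove hunbdd (k : ℝ) k
  have hpos (k : ℕ) : 0 < ‖T ^ n k‖ := k.cast_nonneg.trans_lt (hbig k)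
  choose f hf hTf using fun k : ℕ => (T ^ n k).exists_lt_apply_of_lt_opNorm (half_lt_self (hpos k))
  set u : ℕ → E := fun k => ‖T ^ n k‖⁻¹ • f k with hu
  have hu_norm (k j : ℕ) : ‖(T ^ j) (u k)‖ = ‖T ^ n k‖⁻¹ * ‖(T ^ j) (f k)‖ := by
    rw [hu, map_smul, norm_smul, norm_inv, norm_norm]
  have hu_zero : Tendsto u atTop (nhds 0) := by
    have hinv : Tendsto (fun k => ‖T ^ n k‖⁻¹) atTop (nhds 0) := tendsto_inv_atTop_zero.comp
      (tendsto_atTop_mono (fun k => (hbig k).le) tendsto_natCast_atTop_atTop)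
    refine squeeze_zero_norm (fun k => ?_) hinv
    simpa using (hu_norm k 0).trans_le (mul_le_of_le_one_right (by positivity) (hf k).le)
  obtain ⟨y, φ, hφ, hy⟩ := hcomp 1 n u (tendsto_atTop_mono hn tendsto_id) fun k j hj => by
    rw [hu_norm, inv_mul_le_one₀ (hpos k)]
    exact ((T ^ j).le_of_opNorm_le_of_le (hrec k j hj) (hf k).le).trans_eq (mul_one _)
  have hy_half : 1 / 2 ≤ ‖y‖ := by
    refine ge_of_tendsto hy.norm (Eventually.of_forall fun k => ?_)
    rw [hu_norm, le_inv_mul_iff₀ (hpos _)]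
    linarith [hTf (φ k)]
  have hqu : Tendsto (fun k => q (u (φ k))) atTop (nhds 0) := by
    simpa [Function.comp_def] using (hq.tendsto 0).comp (hu_zero.comp hφ.tendsto_atTop)
  have hqy : q y ≤ 0 := le_of_tendsto_of_tendsto ((hq.tendsto y).comp hy) hqu <|
    Eventually.of_forall fun k => by
      simpa using antitone_seminorm_pow_apply hT (u (φ k)) (Nat.zero_le (n (φ k)))
  rw [hq0 y (hqy.antisymm (apply_nonneg q y)), norm_zero] at hy_half
  norm_num at hy_half

/-- The supremum of a continuous seminorm over the closed unit ball. For an unbounded seminorm this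
is the junk value `0`. -/
noncomputable def unitBallSup (q : Seminorm ℝ E) : ℝ := ⨆ f : Metric.closedBall (0 : E) 1, q f

lemma unitBallSup_nonneg (q : Seminorm ℝ E) : 0 ≤ unitBallSup q :=
  Real.iSup_nonneg fun _ => apply_nonneg q _

lemma bddAbove_range_unitBall (hq : Continuous q) :
    BddAbove (Set.range fun f : Metric.closedBall (0 : E) 1 => q f) := by
  obtain ⟨M, hM, hqM⟩ := q.bound_of_continuous_normedSpace hq
  refine ⟨M, Set.forall_mem_range.2 fun f => (hqM f).trans (mul_le_of_le_one_right hM.le ?_)⟩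
  exact mem_closedBall_zero_iff.1 f.2

lemma le_unitBallSup (hq : Continuous q) {f : E} (hf : ‖f‖ ≤ 1) : q f ≤ unitBallSup q :=
  le_ciSup (bddAbove_range_unitBall hq) ⟨f, mem_closedBall_zero_iff.2 hf⟩

lemma unitBallSup_mono {q' : Seminorm ℝ E} (hq' : Continuous q') (hle : q ≤ q') :
    unitBallSup q ≤ unitBallSup q' :=
  ciSup_mono (bddAbove_range_unitBall hq') fun f => hle (f : E)

lemma exists_lt_of_lt_unitBallSup {b : ℝ} (hb : b < unitBallSup q) : ∃ f, ‖f‖ ≤ 1 ∧ b < q f := by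
  have : Nonempty (Metric.closedBall (0 : E) 1) := ⟨⟨0, by simp⟩⟩
  obtain ⟨⟨f, hf⟩, hbf⟩ := exists_lt_of_lt_ciSup hb
  exact ⟨f, mem_closedBall_zero_iff.1 hf, hbf⟩

lemma IsAsymptoticallyCompact.exists_subseq_of_bddAbove (hcomp : IsAsymptoticallyCompact T)
    (hbdd : BddAbove (Set.range fun n : ℕ => ‖T ^ n‖)) {f : ℕ → E} (hf : ∀ k, ‖f k‖ ≤ 1) :
    ∃ y, ∃ φ : ℕ → ℕ, StrictMono φ ∧
      Tendsto (fun k => (T ^ φ k) (f (φ k))) atTop (nhds y) := by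
  obtain ⟨B, hB⟩ := hbdd
  exact hcomp B id f tendsto_id fun k j _ =>
    ((T ^ j).le_of_opNorm_le_of_le (hB ⟨j, rfl⟩) (hf k)).trans_eq (mul_one B)

/- If `q ∘ T ^ (k + 1)` nearly attains its supremum over the unit ball at `f k`, then every
accumulation point `y` of `T ^ k (f k)` satisfies `q y ≤ q (T y)`, so that `y = 0`. -/
lemma tendsto_unitBallSup_pow (hcomp : IsAsymptoticallyCompact T) (hq : Continuous q)
    (hbdd : BddAbove (Set.range fun n : ℕ => ‖T ^ n‖)) (hT : ∀ f ≠ 0, q (T f) < q f) :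
    Tendsto (fun n : ℕ => unitBallSup (q.comp (T ^ n).toLinearMap)) atTop (nhds 0) := by
  set s : ℕ → ℝ := fun n => unitBallSup (q.comp (T ^ n).toLinearMap)
  have hT_le (f : E) : q (T f) ≤ q f :=
    (eq_or_ne f 0).elim (fun hf => by simp [hf]) fun hf => (hT f hf).le
  have hcont (n : ℕ) : Continuous (q.comp (T ^ n).toLinearMap) := hq.comp (T ^ n).continuous
  have hs_anti : Antitone s := fun m n hmn =>
    unitBallSup_mono (hcont m) fun f => antitone_seminorm_pow_apply hT_le f hmn
  have hs_bdd : BddBelow (Set.range s) := ⟨0, Set.forall_mem_range.2 fun _ => unitBallSup_nonneg _⟩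
  have hs_tendsto := tendsto_atTop_ciInf hs_anti hs_bdd
  set σ := ⨅ n, s n
  choose f hf hfσ using fun k : ℕ => exists_lt_of_lt_unitBallSup
    ((sub_lt_self σ (Nat.one_div_pos_of_nat (n := k))).trans_le (ciInf_le hs_bdd (k + 1)))
  obtain ⟨y, φ, hφ, hy⟩ := hcomp.exists_subseq_of_bddAbove hbdd hf
  have hqy : q y ≤ σ := le_of_tendsto_of_tendsto ((hq.tendsto y).comp hy)
    (hs_tendsto.comp hφ.tendsto_atTop)
    (Eventually.of_forall fun k => le_unitBallSup (hcont (φ k)) (hf (φ k)))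
  have hqTy : σ ≤ q (T y) := by
    have hlower : Tendsto (fun k : ℕ => σ - 1 / ((φ k : ℝ) + 1)) atTop (nhds σ) := by
      simpa using (tendsto_one_div_add_atTop_nhds_zero_nat.comp hφ.tendsto_atTop).const_sub σ
    refine le_of_tendsto_of_tendsto hlower (((hq.comp T.continuous).tendsto y).comp hy)
      (Eventually.of_forall fun k => ?_)
    simpa only [Seminorm.comp_apply, ContinuousLinearMap.coe_coe, pow_succ',
      mul_apply_eq_comp, Function.comp_apply] using (hfσ (φ k)).le
  have hy0 : y = 0 := by
    by_contra hne
    linarith [hT y hne]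
  have hσ : σ = 0 := le_antisymm (by simpa [hy0] using hqTy)
    (le_ciInf fun _ => unitBallSup_nonneg _)
  rwa [hσ] at hs_tendsto

lemma exists_norm_pow_lt_one (hcomp : IsAsymptoticallyCompact T) (hq : Continuous q)
    (hT : ∀ f ≠ 0, q (T f) < q f) : ∃ N ≠ 0, ‖T ^ N‖ < 1 := by
  have hq0 (f : E) (hf : q f = 0) : f = 0 := by
    by_contra hne
    exact ((apply_nonneg q (T f)).trans_lt (hT f hne)).ne' hf
  have hbdd := bddAbove_norm_pow hcomp hq hq0 fun f =>
    (eq_or_ne f 0).elim (fun hf => by simp [hf]) fun hf => (hT f hf).le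
  by_contra! hnorm
  choose f hf hTf using fun k : ℕ => (T ^ (k + 1)).exists_lt_apply_of_lt_opNorm
    (one_half_lt_one.trans_le (hnorm (k + 1) k.succ_ne_zero))
  obtain ⟨y, φ, hφ, hy⟩ := hcomp.exists_subseq_of_bddAbove hbdd fun k => (hf k).le
  have hqy : q y ≤ 0 := le_of_tendsto_of_tendsto ((hq.tendsto y).comp hy)
    ((tendsto_unitBallSup_pow hcomp hq hbdd hT).comp hφ.tendsto_atTop)
    (Eventually.of_forall fun k =>
      le_unitBallSup (q := q.comp (T ^ φ k).toLinearMap) (hq.comp (T ^ φ k).continuous)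
        (hf (φ k)).le)
  have hTy : 1 / 2 ≤ ‖T y‖ := by
    refine ge_of_tendsto ((T.continuous.tendsto y).comp hy).norm (Eventually.of_forall fun k => ?_)
    simpa [pow_succ', mul_apply_eq_comp] using (hTf (φ k)).le
  rw [hq0 y (hqy.antisymm (apply_nonneg q y)), map_zero, norm_zero] at hTy
  norm_num at hTy

end Seminorm

section GeometricDecay

variable {A : Type*} [NormedRing A]

lemma exists_norm_pow_le_of_norm_pow_le_one {a : A} {N : ℕ} (hN : N ≠ 0) (ha : ‖a ^ N‖ ≤ 1) :
    ∃ C ≥ (1 : ℝ), ∀ n, ‖a ^ n‖ ≤ C := by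
  refine ⟨1 + ∑ j ∈ Finset.range N, ‖a ^ j‖, le_add_of_nonneg_right (by positivity), fun n => ?_⟩
  induction n using Nat.strong_induction_on with
  | _ n ih =>
    rcases lt_or_ge n N with hn | hn
    · exact (Finset.single_le_sum (f := fun j => ‖a ^ j‖) (fun _ _ => norm_nonneg _)
        (Finset.mem_range.2 hn)).trans (le_add_of_nonneg_left zero_le_one)
    · calc ‖a ^ n‖ = ‖a ^ N * a ^ (n - N)‖ := by rw [← pow_add, Nat.add_sub_cancel' hn]
        _ ≤ ‖a ^ N‖ * ‖a ^ (n - N)‖ := norm_mul_le _ _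
        _ ≤ ‖a ^ (n - N)‖ := mul_le_of_le_one_left (norm_nonneg _) ha
        _ ≤ _ := ih _ (by omega)

lemma exists_norm_pow_le_geometric [NormedAlgebra ℝ A] {a : A} {N : ℕ} (hN : N ≠ 0)
    (ha : ‖a ^ N‖ < 1) : ∃ ζ ∈ Set.Ioo (0 : ℝ) 1, ∃ C ≥ (1 : ℝ), ∀ n, ‖a ^ n‖ ≤ C * ζ ^ n := by
  have hroot : ∀ᶠ ζ in nhdsWithin (1 : ℝ) (Set.Iio 1), ‖a ^ N‖ < ζ ^ N :=
    ((continuous_pow N).tendsto' (1 : ℝ) 1 (one_pow N)).eventually_const_lt ha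
      |>.filter_mono nhdsWithin_le_nhds
  obtain ⟨ζ, hζN, hζ⟩ := (hroot.and (Ioo_mem_nhdsLT zero_lt_one)).exists
  have hscale (n : ℕ) : ‖(ζ⁻¹ • a) ^ n‖ = (ζ ^ n)⁻¹ * ‖a ^ n‖ := by
    rw [smul_pow, norm_smul, inv_pow, Real.norm_of_nonneg (inv_nonneg.2 (pow_nonneg hζ.1.le n))]
  obtain ⟨C, hC1, hC⟩ := exists_norm_pow_le_of_norm_pow_le_one (a := ζ⁻¹ • a) hN <| by
    rw [hscale]
    exact inv_mul_le_one_of_le₀ hζN.le (pow_nonneg hζ.1.le N)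
  refine ⟨ζ, hζ, C, hC1, fun n => ?_⟩
  have hCn := hC n
  rwa [hscale, inv_mul_le_iff₀ (pow_pos hζ.1 n), mul_comm] at hCn

end GeometricDecay

section QuasiInterior

/-- The vector `h` is a quasi-interior point of the positive cone of a normed lattice, expressed
through truncation: every positive vector is the norm limit of its infima with multiples of `h`. -/
def IsQuasiInterior {X : Type*} [NormedAddCommGroup X] [Lattice X] (h : X) : Prop :=
  0 ≤ h ∧ ∀ g, 0 ≤ g → Tendsto (fun k : ℕ => g ⊓ k • h) atTop (nhds g)

/-- The operator `U` sends nonzero positive vectors to quasi-interior points. On `L^p` with `p < ∞`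
this is the strict positivity of `U`. -/
def IsStronglyPositive {X : Type*} [NormedAddCommGroup X] [NormedSpace ℝ X] [Lattice X]
    (U : X →L[ℝ] X) : Prop :=
  ∀ f, 0 ≤ f → f ≠ 0 → IsQuasiInterior (U f)

lemma inf_add_le_inf_add_inf {G : Type*} [Lattice G] [AddCommGroup G] [AddLeftMono G] {a b c : G}
    (ha : 0 ≤ a) (hb : 0 ≤ b) (hc : 0 ≤ c) : a ⊓ (b + c) ≤ a ⊓ b + a ⊓ c := by
  rw [← sub_le_iff_le_add']
  refine le_inf ((sub_le_self _ (le_inf ha hb)).trans inf_le_left) ?_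
  exact sub_le_comm.1 (le_inf ((sub_le_self _ hc).trans inf_le_left)
    (sub_le_iff_le_add.2 inf_le_right))

lemma inf_nsmul_eq_zero {G : Type*} [Lattice G] [AddCommGroup G] [AddLeftMono G] {a b : G}
    (ha : 0 ≤ a) (hb : 0 ≤ b) (hab : a ⊓ b = 0) (k : ℕ) : a ⊓ k • b = 0 := by
  refine le_antisymm ?_ (le_inf ha (nsmul_nonneg hb k))
  induction k with
  | zero => simp
  | succ k ih =>
    rw [succ_nsmul']
    exact (inf_add_le_inf_add_inf ha hb (nsmul_nonneg hb k)).trans (by rwa [hab, zero_add])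

variable {X : Type*} [NormedAddCommGroup X] [Lattice X] {h : X}

lemma IsQuasiInterior.eq_zero_of_inf_eq_zero [IsOrderedAddMonoid X] (hh : IsQuasiInterior h)
    {g : X} (hg : 0 ≤ g) (hgh : g ⊓ h = 0) : g = 0 := by
  refine tendsto_nhds_unique (hh.2 g hg) ?_
  simp only [inf_nsmul_eq_zero hg hh.1 hgh, tendsto_const_nhds]

end QuasiInterior

section PositiveFunctional

variable {X : Type*} [NormedAddCommGroup X] [NormedSpace ℝ X] [Lattice X] [IsOrderedAddMonoid X]
  {φ : X →L[ℝ] ℝ} {U : X →L[ℝ] X} {r : ℝ} {f h : X}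

lemma IsQuasiInterior.map_pos (hh : IsQuasiInterior h) (hφ : Monotone φ) (hφ0 : φ ≠ 0) :
    0 < φ h := by
  have hφh : 0 ≤ φ h := by simpa using hφ hh.1
  refine hφh.lt_of_ne' fun hzero => hφ0 ?_
  have hpos (g : X) (hg : 0 ≤ g) : φ g = 0 := by
    refine le_antisymm ?_ (by simpa using hφ hg)
    refine le_of_tendsto ((φ.continuous.tendsto g).comp (hh.2 g hg))
      (Eventually.of_forall fun k => ?_)
    simpa [hzero] using hφ (inf_le_right : g ⊓ k • h ≤ k • h)
  ext g
  rw [← posPart_sub_negPart g, map_sub, hpos _ (posPart_nonneg g), hpos _ (negPart_nonneg g),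
    sub_self, zero_apply]

lemma IsStronglyPositive.map_pos_of_eigenfunctional (hU : IsStronglyPositive U) (hφ : Monotone φ)
    (hφ0 : φ ≠ 0) (hφU : ∀ f, φ (U f) = r * φ f) (hf : 0 ≤ f) (hf0 : f ≠ 0) : 0 < φ f := by
  have hfU : 0 < r * φ f := hφU f ▸ (hU f hf hf0).map_pos hφ hφ0
  exact (by simpa using hφ hf : 0 ≤ φ f).lt_of_ne' (right_ne_zero_of_mul hfU.ne')

/- If `a = U f⁺` and `b = U f⁻`, then `U |f| - |U f| = a + b - |a - b| = 2 (a ⊓ b)`. -/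
lemma IsStronglyPositive.map_abs_lt (hU : IsStronglyPositive U)
    (hφ : ∀ f, 0 ≤ f → f ≠ 0 → 0 < φ f) (hf : φ f = 0) (hf0 : f ≠ 0) : φ |U f| < φ (U |f|) := by
  have hparts : φ f⁺ = φ f⁻ := by
    rwa [← posPart_sub_negPart f, map_sub, sub_eq_zero] at hf
  have hφ_zero (g : X) (hg : 0 ≤ g) (hφg : φ g = 0) : g = 0 := by
    by_contra hne
    exact (hφ g hg hne).ne' hφg
  have hpos : f⁺ ≠ 0 := fun h => hf0 <| by
    rw [← posPart_sub_negPart f, h, zero_sub, neg_eq_zero]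
    exact hφ_zero _ (negPart_nonneg f) (by rw [← hparts, h, map_zero])
  have hneg : f⁻ ≠ 0 := fun h => hpos <|
    hφ_zero _ (posPart_nonneg f) (by rw [hparts, h, map_zero])
  have ha := hU _ (posPart_nonneg f) hpos
  have hb := hU _ (negPart_nonneg f) hneg
  have hinf : U f⁺ ⊓ U f⁻ ≠ 0 := fun h => by
    rw [hb.eq_zero_of_inf_eq_zero ha.1 h] at ha
    exact hpos <| ha.eq_zero_of_inf_eq_zero (posPart_nonneg f) (inf_eq_right.2 (posPart_nonneg f))
  have hdefect : U |f| = |U f| + 2 • (U f⁺ ⊓ U f⁻) := by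
    rw [two_nsmul_inf_eq_add_sub_abs_sub, abs_sub_comm, ← map_sub, posPart_sub_negPart, ← map_add,
      posPart_add_negPart, add_sub_cancel]
  rw [hdefect, map_add, map_nsmul]
  exact lt_add_of_pos_right _ (nsmul_pos (hφ _ (le_inf ha.1 hb.1) hinf) two_ne_zero)

lemma abs_smul_of_nonneg [PosSMulMono ℝ X] {c : ℝ} (hc : 0 ≤ c) (f : X) : |c • f| = c • |f| := by
  rcases hc.eq_or_lt with rfl | hc
  · simp
  · rw [abs, ← smul_neg]
    exact ((OrderIso.smulRight hc).map_sup f (-f)).symm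

/-- The seminorm `f ↦ φ |f|` attached to a positive functional `φ` on a normed lattice. -/
def absSeminorm [PosSMulMono ℝ X] (φ : X →L[ℝ] ℝ) (hφ : Monotone φ) : Seminorm ℝ X :=
  Seminorm.of (fun f => φ |f|) (fun f g => (hφ (abs_add_le f g)).trans_eq (map_add φ _ _))
    fun c f => by
      rw [Real.norm_eq_abs, ← smul_eq_mul, ← map_smul, ← abs_smul_of_nonneg (abs_nonneg c)]
      rcases abs_choice c with h | h <;> rw [h]
      rw [neg_smul, abs_neg]

lemma continuous_absSeminorm [HasSolidNorm X] [PosSMulMono ℝ X] (hφ : Monotone φ) :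
    Continuous (absSeminorm φ hφ) :=
  φ.continuous.comp (continuous_id.sup continuous_neg)

lemma IsStronglyPositive.absSeminorm_inv_smul_lt [PosSMulMono ℝ X] (hU : IsStronglyPositive U)
    (hφ : Monotone φ) (hφ0 : φ ≠ 0) (hr : 0 < r) (hφU : ∀ f, φ (U f) = r * φ f) (hf : φ f = 0)
    (hf0 : f ≠ 0) : absSeminorm φ hφ ((r⁻¹ • U) f) < absSeminorm φ hφ f := by
  have hpos (g : X) (hg : 0 ≤ g) (hg0 : g ≠ 0) : 0 < φ g :=
    hU.map_pos_of_eigenfunctional hφ hφ0 hφU hg hg0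
  calc φ |r⁻¹ • U f| = r⁻¹ * φ |U f| := by
        rw [abs_smul_of_nonneg (inv_nonneg.2 hr.le), map_smul, smul_eq_mul]
    _ < r⁻¹ * φ (U |f|) := by gcongr; exact hU.map_abs_lt hpos hf hf0
    _ = φ |f| := by rw [hφU, inv_mul_cancel_left₀ hr.ne']

end PositiveFunctional

section LpSpace

variable {α E : Type*} [MeasurableSpace α] {μ : Measure α} {p : ℝ≥0∞} [NormedAddCommGroup E]

instance instPosSMulMonoLp {𝕜 : Type*} [NormedField 𝕜] [Preorder 𝕜] [PartialOrder E]
    [NormedSpace 𝕜 E] [PosSMulMono 𝕜 E] : PosSMulMono 𝕜 (Lp E p μ) where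
  smul_le_smul_of_nonneg_left c hc f g hfg := by
    rw [← Lp.coeFn_le] at hfg ⊢
    filter_upwards [hfg, Lp.coeFn_smul c f, Lp.coeFn_smul c g] with x hx hf hg
    rw [hf, hg]
    exact smul_le_smul_of_nonneg_left hx hc

lemma tendsto_Lp_of_norm_sub_le [Fact (1 ≤ p)] (hp : p ≠ ∞) {f : ℕ → Lp E p μ} {g : Lp E p μ}
    {b : α → ℝ} (hb : MemLp b p μ) (hfb : ∀ n, ∀ᵐ x ∂μ, ‖f n x - g x‖ ≤ b x)
    (hlim : ∀ᵐ x ∂μ, Tendsto (fun n => f n x) atTop (nhds (g x))) :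
    Tendsto f atTop (nhds g) := by
  have hp0 : p ≠ 0 := (one_pos.trans_le (Fact.out : 1 ≤ p)).ne'
  have hp_pos : 0 < p.toReal := ENNReal.toReal_pos hp0 hp
  have hlintegral : Tendsto (fun n => ∫⁻ x, ‖f n x - g x‖ₑ ^ p.toReal ∂μ) atTop
      (nhds (∫⁻ _, 0 ∂μ)) := by
    refine tendsto_lintegral_of_dominated_convergence' (fun x => ‖b x‖ₑ ^ p.toReal)
      (fun n => ?_) (fun n => ?_)
      (lintegral_rpow_enorm_lt_top_of_eLpNorm_lt_top hp0 hp hb.eLpNorm_lt_top).ne ?_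
    · exact ((Lp.aestronglyMeasurable (f n)).sub (Lp.aestronglyMeasurable g)).enorm.pow_const _
    · filter_upwards [hfb n] with x hx
      gcongr
      exact enorm_le_iff_norm_le.2 (hx.trans (le_abs_self _))
    · filter_upwards [hlim] with x hx
      have hx0 := (hx.sub_const (g x)).enorm.ennrpow_const p.toReal
      simpa [hp_pos] using hx0
  rw [Lp.tendsto_Lp_iff_tendsto_eLpNorm']
  have hroot := hlintegral.ennrpow_const (1 / p.toReal)
  rw [lintegral_zero, ENNReal.zero_rpow_of_pos (one_div_pos.2 hp_pos)] at hroot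
  simpa only [eLpNorm_eq_lintegral_rpow_enorm_toReal hp0 hp, Pi.sub_apply] using hroot

lemma isQuasiInterior_of_ae_pos [Fact (1 ≤ p)] (hp : p ≠ ∞) {h : Lp ℝ p μ}
    (hh : ∀ᵐ x ∂μ, 0 < h x) : IsQuasiInterior h := by
  have hh0 : 0 ≤ h := (Lp.coeFn_nonneg h).1 (hh.mono fun x hx => hx.le)
  refine ⟨hh0, fun g hg => ?_⟩
  have hinf (k : ℕ) : ∀ᵐ x ∂μ, (g ⊓ k • h) x = min (g x) (k * h x) := by
    rw [← Nat.cast_smul_eq_nsmul ℝ]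
    filter_upwards [Lp.coeFn_inf g ((k : ℝ) • h), Lp.coeFn_smul (k : ℝ) h] with x hinf hsmul
    rw [hinf, Pi.inf_apply, hsmul, Pi.smul_apply, smul_eq_mul]
  refine tendsto_Lp_of_norm_sub_le hp (Lp.memLp g) (fun k => ?_) ?_
  · filter_upwards [hinf k, hh, (Lp.coeFn_nonneg g).2 hg] with x hx hhx hgx
    have hmin : 0 ≤ min (g x) (k * h x) := le_min hgx (by positivity)
    rw [hx, Real.norm_eq_abs, abs_le]
    constructor <;> linarith [min_le_left (g x) (k * h x), show 0 ≤ g x from hgx]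
  · filter_upwards [ae_all_iff.2 hinf, hh] with x hx hhx
    refine tendsto_const_nhds.congr' ?_
    filter_upwards [(tendsto_natCast_atTop_atTop.atTop_mul_const hhx).eventually_ge_atTop (g x)]
      with k hk
    rw [hx, min_eq_left hk]

end LpSpace

theorem geometric_decay_on_kernel_of_eigenfunctional_general
    {X : Type*} [NormedAddCommGroup X] [NormedSpace ℝ X] [CompleteSpace X] [Lattice X]
    [HasSolidNorm X] [IsOrderedAddMonoid X] [PosSMulMono ℝ X] (U W K : X →L[ℝ] X)
    (hU : IsStronglyPositive U) (r : ℝ) (hsplit : U = W + K) (hW : ‖W‖ < r)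
    (hcomp : ∀ lam : ℝ, ‖W‖ < lam →
      IsPowerCompact (K * Ring.inverse (lam • (1 : X →L[ℝ] X) - W)))
    (φ₀ : X →L[ℝ] ℝ) (hφ₀pos : ∀ f, 0 ≤ f → 0 ≤ φ₀ f) (hφ₀ne : φ₀ ≠ 0)
    (hφ₀ : ∀ f, φ₀ (U f) = r * φ₀ f) :
    ∃ ζ : ℝ, 0 < ζ ∧ ζ < 1 ∧ ∃ C : ℝ, 1 ≤ C ∧
      ∀ (n : ℕ) (f : X), φ₀ f = 0 → ‖((r⁻¹ • U) ^ n) f‖ ≤ C * ζ ^ n * ‖f‖ := by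
  have hr : 0 < r := (norm_nonneg W).trans_lt hW
  have hφ₀mono : Monotone φ₀ := (monotone_iff_map_nonneg φ₀).2 hφ₀pos
  set T := r⁻¹ • U with hT
  have hφ₀T (f : X) : φ₀ (T f) = φ₀ f := by simp [hT, hφ₀, hr.ne']
  have hker : ∀ f ∈ φ₀.ker, T f ∈ φ₀.ker := fun f hf => by simpa [hφ₀T] using hf
  have hTcomp : IsAsymptoticallyCompact (T.restrict hker) :=
    (hT ▸ hsplit ▸ isQuasiCompact_inv_smul_add hW hcomp).isAsymptoticallyCompact.restrict
      φ₀.isClosed_ker hker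
  let q : Seminorm ℝ φ₀.ker := (absSeminorm φ₀ hφ₀mono).comp φ₀.ker.subtype
  have hq : Continuous q := (continuous_absSeminorm hφ₀mono).comp continuous_subtype_val
  have hqT : ∀ f ≠ 0, q (T.restrict hker f) < q f := fun f hf =>
    hU.absSeminorm_inv_smul_lt hφ₀mono hφ₀ne hr hφ₀ f.2 (by simpa using hf)
  obtain ⟨N, hN, hTN⟩ := exists_norm_pow_lt_one hTcomp hq hqT
  obtain ⟨ζ, hζ, C, hC, hdecay⟩ := exists_norm_pow_le_geometric hN hTN
  refine ⟨ζ, hζ.1, hζ.2, C, hC, fun n f hf => ?_⟩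
  rw [← coe_restrict_pow_apply hker n ⟨f, hf⟩]
  exact ((T.restrict hker) ^ n).le_of_opNorm_le (hdecay n) ⟨f, hf⟩

/-- **Theorem 2.4 iv).** Let `U` be a strictly positive bounded linear operator on
`X = L^p(E, μ)` with spectral radius `r(U) > 0` (Gelfand formula), admitting a splitting
`U = W + K` with `‖W‖ < r(U)` and `K (λ - W)⁻¹` power compact for every real `λ > ‖W‖`,
and let `φ₀ ∈ X'₊ \ {0}` satisfy `U* φ₀ = r(U) φ₀`.  Then, with `Ũ = U / r(U)`, there
exist `ζ ∈ (0,1)` and `C ≥ 1` such that `‖Ũⁿ f‖ ≤ C ζⁿ ‖f‖` for every `n` and every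
`f` with `φ₀(f) = 0`. -/
theorem geometric_decay_on_kernel_of_eigenfunctional
    {α : Type*} [MeasurableSpace α] {μ : Measure α} [SigmaFinite μ]
    {p : ℝ≥0∞} [Fact (1 ≤ p)] (hp : p ≠ ∞)
    (U W K : Lp ℝ p μ →L[ℝ] Lp ℝ p μ)
    (hstrict : ∀ f : Lp ℝ p μ, 0 ≤ f → f ≠ 0 → ∀ᵐ x ∂μ, 0 < (U f) x)
    (r : ℝ) (hr : Tendsto (fun n : ℕ => ‖U ^ n‖ ^ (1 / (n : ℝ))) atTop (nhds r))
    (hr0 : 0 < r) (hsplit : U = W + K) (hW : ‖W‖ < r)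
    (hcomp : ∀ lam : ℝ, ‖W‖ < lam → ∃ n : ℕ, 0 < n ∧
      IsCompactOperator ⇑((K * Ring.inverse (lam • (1 : Lp ℝ p μ →L[ℝ] Lp ℝ p μ) - W)) ^ n))
    (φ₀ : Lp ℝ p μ →L[ℝ] ℝ) (hφ₀pos : ∀ f, 0 ≤ f → 0 ≤ φ₀ f) (hφ₀ne : φ₀ ≠ 0)
    (hφ₀ : ∀ f, φ₀ (U f) = r * φ₀ f) :
    ∃ ζ : ℝ, 0 < ζ ∧ ζ < 1 ∧ ∃ C : ℝ, 1 ≤ C ∧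
      ∀ (n : ℕ) (f : Lp ℝ p μ), φ₀ f = 0 →
        ‖((r⁻¹ • U) ^ n) f‖ ≤ C * ζ ^ n * ‖f‖ :=
  geometric_decay_on_kernel_of_eigenfunctional_general U W K
    (fun f hf hf0 => isQuasiInterior_of_ae_pos hp (hstrict f hf hf0)) r hsplit hW hcomp φ₀ hφ₀pos
    hφ₀ne hφ₀
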